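/- Let n ≥ 3 and let λ be a partition of n. Then both Σ_{π ∈ C_λ} occ₍₁₋₃₋₂₎(π) and Σ_{π ∈ C_λ} occ₍₂₋₁₋₃₎(π) are equal to |C_λ| · ( C(n,3)/6 + (n+1)(n−3)·X₁/60 − (n+1)·X₂/60 − (n+1)·X₃/20 − X₄/30 ), where occ₍₁₋₃₋₂₎(π) = #{(i,j,k) : 1 ≤ i < j < k ≤ n, π(i) < π(k) < π(j)} and occ₍₂₋₁₋₃₎(π) = #{(i,j,k) : 1 ≤ i < j < k ≤ n, π(j) < π(i) < π(k)} count occurrences of the classical patterns 132 and 213 in π. -/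

import Mathlib

open Equiv Finset

/-- The conjugacy class of permutations of `Fin n` with cycle type `lam`
(cycle type includes fixed points as parts of size 1, via `Equiv.Perm.partition`). -/
def conjClass (n : ℕ) (lam : n.Partition) : Finset (Equiv.Perm (Fin n)) :=
  Finset.univ.filter fun π => (Equiv.Perm.partition π).parts = lam.parts

set_option linter.unusedSimpArgs false

theorem count_cyc {n : ℕ} (π : Perm (Fin n)) (k : ℕ) (hk : k.Prime) :
    k * π.partition.parts.count k = (univ.filter fun x => π x ≠ x ∧ (π ^ k) x = x).card := by
  have h0 : (univ.filter fun x => π x ≠ x ∧ (π ^ k) x = x) =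
      (π.cycleFactorsFinset.filter fun c => c.support.card = k).biUnion fun c => c.support := by
    ext x
    simp only [mem_filter, mem_univ, true_and, mem_biUnion]
    constructor
    · rintro ⟨h1, h2⟩
      refine ⟨π.cycleOf x, ⟨Perm.cycleOf_mem_cycleFactorsFinset_iff.2 (Perm.mem_support.2 h1), ?_⟩, ?_⟩
      · have hc := Perm.isCycle_cycleOf π h1
        rw [← hc.orderOf]
        apply orderOf_eq_prime_iff (hp := ⟨hk⟩) |>.2
        refine ⟨hc.pow_eq_one_iff.2 ⟨x, ?_, ?_⟩, ?_⟩
        · simpa using h1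
        · simpa using h2
        · simpa using h1
      · simp [h1]
    · rintro ⟨c, ⟨hc, hk'⟩, hx⟩
      have hcc := Perm.cycle_is_cycleOf hx hc
      have hcyc := (Perm.mem_cycleFactorsFinset_iff.1 hc).1
      rw [hcc] at hk' hx hcyc
      have h1 : π x ≠ x := by simpa using (Perm.mem_support.1 hx)
      refine ⟨h1, ?_⟩
      rw [← Perm.cycleOf_pow_apply_self, ← hk', ← hcyc.orderOf, pow_orderOf_eq_one]
      rfl
  rw [h0, card_biUnion]
  · rw [Finset.sum_congr rfl (g := fun _ => k) (fun c hc => (mem_filter.1 hc).2), Perm.parts_partition,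
      Multiset.count_add, Multiset.count_replicate, if_neg hk.one_lt.ne, Perm.cycleType_def,
      Multiset.count_map]
    simp only [sum_const, smul_eq_mul, mul_comm, add_zero]
    congr 1
    simp only [eq_comm (a := k)]
    rfl
  · intro a ha b hb hab
    exact (Perm.disjoint_iff_disjoint_support.1
      (π.cycleFactorsFinset_pairwise_disjoint (mem_filter.1 ha).1 (mem_filter.1 hb).1 hab))

theorem count_one {n : ℕ} (π : Perm (Fin n)) :
    π.partition.parts.count 1 = (univ.filter fun x => π x = x).card := by
  rw [Perm.parts_partition, Multiset.count_add, Multiset.count_replicate, if_pos rfl,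
    Multiset.count_eq_zero_of_notMem]
  · rw [zero_add, Perm.support, ← Finset.card_compl]
    congr 1
    ext; simp
  · intro h
    exact absurd (Perm.one_lt_of_mem_cycleType h) (lt_irrefl _)

theorem fix_pow {n : ℕ} (π : Perm (Fin n)) (k : ℕ) (hk : k.Prime) :
    (∑ x, if (π ^ k) x = x then (1:ℚ) else 0) =
      π.partition.parts.count 1 + k * π.partition.parts.count k := by
  have := count_cyc π k hk
  have h1 := count_one π
  rw [h1, ← Nat.cast_mul, this]
  simp only [Finset.card_filter, Nat.cast_sum, ← Finset.sum_add_distrib]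
  refine Finset.sum_congr rfl fun x _ => ?_
  by_cases h : π x = x
  · have h' : (π ^ k) x = x := Function.IsFixedPt.perm_pow (e := π) h k
    simp [h, h']
  · simp [h]

def pat {α : Type*} [LinearOrder α] (a b c a' b' c' : α) : ℚ :=
  if a < b ∧ b < c ∧ a' < c' ∧ c' < b' then 1 else 0

def patCount (m : ℕ) (e : Fin 6 → Fin m) : ℕ :=
  (univ.filter fun τ : Perm (Fin m) => τ (e 0) < τ (e 1) ∧ τ (e 1) < τ (e 2) ∧
    τ (e 3) < τ (e 5) ∧ τ (e 5) < τ (e 4)).card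

theorem exists_std {n m : ℕ} (y : Fin m → Fin n) (hy : Function.Injective y) :
    ∃ τ : Perm (Fin m), ∀ a b, y a < y b ↔ τ a < τ b := by
  refine ⟨(Tuple.sort y)⁻¹, fun a b => ?_⟩
  have h : StrictMono (y ∘ Tuple.sort y) :=
    (Tuple.monotone_sort y).strictMono_of_injective (hy.comp (Equiv.injective _))
  have := h.lt_iff_lt (a := (Tuple.sort y)⁻¹ a) (b := (Tuple.sort y)⁻¹ b)
  simpa using this

theorem sum_std {n m : ℕ} (y : Fin m → Fin n) (hy : Function.Injective y) (e : Fin 6 → Fin m) :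
    ∑ τ : Perm (Fin m), pat (y (τ (e 0))) (y (τ (e 1))) (y (τ (e 2))) (y (τ (e 3)))
      (y (τ (e 4))) (y (τ (e 5))) = patCount m e := by
  obtain ⟨τ₀, h⟩ := exists_std y hy
  simp only [pat, h, patCount]
  rw [Finset.natCast_card_filter, ← Equiv.sum_comp (Equiv.mulLeft τ₀) (fun τ : Perm (Fin m) =>
    (if τ (e 0) < τ (e 1) ∧ τ (e 1) < τ (e 2) ∧
      τ (e 3) < τ (e 5) ∧ τ (e 5) < τ (e 4) then 1 else 0 : ℚ))]
  rfl

theorem key {n m : ℕ} (x : Fin m → Fin n) (hx : Function.Injective x) (e : Fin 6 → Fin m) (N : ℕ)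
    (hN : patCount m e = N) :
    ∑ σ : Perm (Fin n), pat (σ (x (e 0))) (σ (x (e 1))) (σ (x (e 2))) (σ (x (e 3)))
      (σ (x (e 4))) (σ (x (e 5))) = n.factorial * (N / m.factorial) := by
  set T : ℚ := ∑ σ : Perm (Fin n), pat (σ (x (e 0))) (σ (x (e 1))) (σ (x (e 2))) (σ (x (e 3)))
      (σ (x (e 4))) (σ (x (e 5))) with hT
  have h1 : ∀ τ : Perm (Fin m), T = ∑ σ : Perm (Fin n), pat (σ (x (τ (e 0)))) (σ (x (τ (e 1))))
      (σ (x (τ (e 2)))) (σ (x (τ (e 3)))) (σ (x (τ (e 4)))) (σ (x (τ (e 5)))) := by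
    intro τ
    rw [hT, ← Equiv.sum_comp (Equiv.mulRight (τ.viaFintypeEmbedding ⟨x, hx⟩))]
    have : ∀ a, (τ.viaFintypeEmbedding ⟨x, hx⟩) (x a) = x (τ a) := fun a =>
      τ.viaFintypeEmbedding_apply_image ⟨x, hx⟩ a
    simp [this]
  have h2 : (m.factorial : ℚ) * T = n.factorial * N := by
    calc (m.factorial : ℚ) * T = ∑ τ : Perm (Fin m), T := by
          simp [Fintype.card_perm]
      _ = _ := Finset.sum_congr rfl fun τ _ => h1 τ
      _ = _ := Finset.sum_comm
      _ = ∑ σ : Perm (Fin n), (N : ℚ) := Finset.sum_congr rfl fun σ _ => by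
          rw [← hN]; exact sum_std (fun a => σ (x a)) (σ.injective.comp hx) e
      _ = _ := by simp [Fintype.card_perm]
  have : (m.factorial : ℚ) ≠ 0 := by positivity
  field_simp
  linarith


/-- weighted symmetrisation over the six orderings of the arguments -/
def sym6 {α : Type*} (R : α → α → α → ℚ) (c₀ c₁ c₂ c₃ c₄ c₅ : ℚ) (i j k : α) : ℚ :=
  c₀ * R i j k + c₁ * R i k j + c₂ * R j i k + c₃ * R j k i + c₄ * R k i j + c₅ * R k j i

def bigQ {α : Type*} (D : α → α → ℚ) (i j k : α) : ℚ :=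
  sym6 (fun _ _ _ => 1) (1/36) 0 0 0 0 0 i j k +
  sym6 (fun i _ _ => D i i) (1/45) 0 (-1/360) 0 (-1/360) 0 i j k +
  sym6 (fun i j _ => D i j) (-1/360) (-7/360) (-7/360) (1/45) (-1/360) (1/180) i j k +
  sym6 (fun i j _ => D i i * D j j) (-1/180) (-1/180) 0 (-1/45) 0 0 i j k +
  sym6 (fun i j k => D i i * D j k) (1/90) (1/36) (-1/180) (7/360) (7/360) (-1/180) i j k +
  sym6 (fun i j _ => D i j * D j i) (-1/180) (-1/180) 0 (1/36) 0 0 i j k +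
  sym6 (fun i j k => D i j * D j k) (-1/180) (-1/72) (1/90) (-1/180) (-1/45) (-1/72) i j k +
  sym6 (fun i j k => D i i * D j j * D k k) (-1/90) 0 0 0 0 0 i j k +
  sym6 (fun i j k => D i i * D j k * D k j) (1/45) 0 (-1/90) 0 (-1/90) 0 i j k +
  sym6 (fun i j k => D i j * D j k * D k i) (-1/90) (1/45) 0 0 0 0 i j k

theorem inj_of_nodup {α : Type*} {m : ℕ} (x : Fin m → α) (h : (List.ofFn x).Nodup) :
    Function.Injective x := List.nodup_ofFn.1 h

theorem fin_aux {F T B c : ℚ} (h1 : T = F * c) (h2 : B = c) : T = F * B := by rw [h2, h1]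

set_option maxHeartbeats 4000000 in
theorem pointwise {n : ℕ} (π : Perm (Fin n)) (i j k : Fin n) (hij : i ≠ j) (hik : i ≠ k)
    (hjk : j ≠ k) :
    ∑ σ : Perm (Fin n), pat (σ i) (σ j) (σ k) (σ (π i)) (σ (π j)) (σ (π k)) =
      n.factorial * bigQ (fun u v => if π u = v then 1 else 0) i j k := by
  have hji := hij.symm
  have hki := hik.symm
  have hkj := hjk.symm
  have eij : π i ≠ π j := fun h => hij (π.injective h)
  have eik : π i ≠ π k := fun h => hik (π.injective h)
  have ejk : π j ≠ π k := fun h => hjk (π.injective h)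
  have split : ∀ u, π u = i ∨ π u = j ∨ π u = k ∨ (π u ≠ i ∧ π u ≠ j ∧ π u ≠ k) := by
    intro u; tauto
  rcases split i with hi | hi | hi | ⟨hi1, hi2, hi3⟩ <;>
  rcases split j with hj | hj | hj | ⟨hj1, hj2, hj3⟩ <;>
  rcases split k with hk | hk | hk | ⟨hk1, hk2, hk3⟩ <;>
  first
  | (exfalso; first | exact eij (hi.trans hj.symm) | exact eik (hi.trans hk.symm) | exact ejk (hj.trans hk.symm))
  | skip
  · rw [hi, hj, hk]
    exact fin_aux (key ![i, j, k] (inj_of_nodup _ (by simp [hij, hik, hjk])) ![0, 1, 2, 0, 1, 2] 0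
      (by decide +kernel))
      (by simp only [bigQ, sym6, hij, hik, hjk, hji, hki, hkj, hi, hj, hk, if_true, if_false]; norm_num [Nat.factorial])
  · rw [hi, hj]
    exact fin_aux (key ![i, j, k, π k] (inj_of_nodup _ (by simp [hij, hik, hjk, hk1.symm, hk2.symm, hk3.symm])) ![0, 1, 2, 0, 1, 3] 1
      (by decide +kernel))
      (by simp only [bigQ, sym6, hij, hik, hjk, hji, hki, hkj, hk1, hk2, hk3, hi, hj, if_true, if_false]; norm_num [Nat.factorial])
  · rw [hi, hj, hk]
    exact fin_aux (key ![i, j, k] (inj_of_nodup _ (by simp [hij, hik, hjk])) ![0, 1, 2, 0, 2, 1] 1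
      (by decide +kernel))
      (by simp only [bigQ, sym6, hij, hik, hjk, hji, hki, hkj, hi, hj, hk, if_true, if_false]; norm_num [Nat.factorial])
  · rw [hi, hj]
    exact fin_aux (key ![i, j, k, π k] (inj_of_nodup _ (by simp [hij, hik, hjk, hk1.symm, hk2.symm, hk3.symm])) ![0, 1, 2, 0, 2, 3] 2
      (by decide +kernel))
      (by simp only [bigQ, sym6, hij, hik, hjk, hji, hki, hkj, hk1, hk2, hk3, hi, hj, if_true, if_false]; norm_num [Nat.factorial])
  · rw [hi, hk]
    exact fin_aux (key ![i, j, k, π j] (inj_of_nodup _ (by simp [hij, hik, hjk, hj1.symm, hj2.symm, hj3.symm])) ![0, 1, 2, 0, 3, 1] 2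
      (by decide +kernel))
      (by simp only [bigQ, sym6, hij, hik, hjk, hji, hki, hkj, hj1, hj2, hj3, hi, hk, if_true, if_false]; norm_num [Nat.factorial])
  · rw [hi, hk]
    exact fin_aux (key ![i, j, k, π j] (inj_of_nodup _ (by simp [hij, hik, hjk, hj1.symm, hj2.symm, hj3.symm])) ![0, 1, 2, 0, 3, 2] 1
      (by decide +kernel))
      (by simp only [bigQ, sym6, hij, hik, hjk, hji, hki, hkj, hj1, hj2, hj3, hi, hk, if_true, if_false]; norm_num [Nat.factorial])
  · rw [hi]
    exact fin_aux (key ![i, j, k, π j, π k] (inj_of_nodup _ (by simp [hij, hik, hjk, hj1.symm, hj2.symm, hj3.symm, hk1.symm, hk2.symm, hk3.symm, ejk])) ![0, 1, 2, 0, 3, 4] 6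
      (by decide +kernel))
      (by simp only [bigQ, sym6, hij, hik, hjk, hji, hki, hkj, hj1, hj2, hj3, hk1, hk2, hk3, hi, if_true, if_false]; norm_num [Nat.factorial])
  · rw [hi, hj, hk]
    exact fin_aux (key ![i, j, k] (inj_of_nodup _ (by simp [hij, hik, hjk])) ![0, 1, 2, 1, 0, 2] 0
      (by decide +kernel))
      (by simp only [bigQ, sym6, hij, hik, hjk, hji, hki, hkj, hi, hj, hk, if_true, if_false]; norm_num [Nat.factorial])
  · rw [hi, hj]
    exact fin_aux (key ![i, j, k, π k] (inj_of_nodup _ (by simp [hij, hik, hjk, hk1.symm, hk2.symm, hk3.symm])) ![0, 1, 2, 1, 0, 3] 0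
      (by decide +kernel))
      (by simp only [bigQ, sym6, hij, hik, hjk, hji, hki, hkj, hk1, hk2, hk3, hi, hj, if_true, if_false]; norm_num [Nat.factorial])
  · rw [hi, hj, hk]
    exact fin_aux (key ![i, j, k] (inj_of_nodup _ (by simp [hij, hik, hjk])) ![0, 1, 2, 1, 2, 0] 0
      (by decide +kernel))
      (by simp only [bigQ, sym6, hij, hik, hjk, hji, hki, hkj, hi, hj, hk, if_true, if_false]; norm_num [Nat.factorial])
  · rw [hi, hj]
    exact fin_aux (key ![i, j, k, π k] (inj_of_nodup _ (by simp [hij, hik, hjk, hk1.symm, hk2.symm, hk3.symm])) ![0, 1, 2, 1, 2, 3] 1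
      (by decide +kernel))
      (by simp only [bigQ, sym6, hij, hik, hjk, hji, hki, hkj, hk1, hk2, hk3, hi, hj, if_true, if_false]; norm_num [Nat.factorial])
  · rw [hi, hk]
    exact fin_aux (key ![i, j, k, π j] (inj_of_nodup _ (by simp [hij, hik, hjk, hj1.symm, hj2.symm, hj3.symm])) ![0, 1, 2, 1, 3, 0] 0
      (by decide +kernel))
      (by simp only [bigQ, sym6, hij, hik, hjk, hji, hki, hkj, hj1, hj2, hj3, hi, hk, if_true, if_false]; norm_num [Nat.factorial])
  · rw [hi, hk]
    exact fin_aux (key ![i, j, k, π j] (inj_of_nodup _ (by simp [hij, hik, hjk, hj1.symm, hj2.symm, hj3.symm])) ![0, 1, 2, 1, 3, 2] 1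
      (by decide +kernel))
      (by simp only [bigQ, sym6, hij, hik, hjk, hji, hki, hkj, hj1, hj2, hj3, hi, hk, if_true, if_false]; norm_num [Nat.factorial])
  · rw [hi]
    exact fin_aux (key ![i, j, k, π j, π k] (inj_of_nodup _ (by simp [hij, hik, hjk, hj1.symm, hj2.symm, hj3.symm, hk1.symm, hk2.symm, hk3.symm, ejk])) ![0, 1, 2, 1, 3, 4] 3
      (by decide +kernel))
      (by simp only [bigQ, sym6, hij, hik, hjk, hji, hki, hkj, hj1, hj2, hj3, hk1, hk2, hk3, hi, if_true, if_false]; norm_num [Nat.factorial])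
  · rw [hi, hj, hk]
    exact fin_aux (key ![i, j, k] (inj_of_nodup _ (by simp [hij, hik, hjk])) ![0, 1, 2, 2, 0, 1] 0
      (by decide +kernel))
      (by simp only [bigQ, sym6, hij, hik, hjk, hji, hki, hkj, hi, hj, hk, if_true, if_false]; norm_num [Nat.factorial])
  · rw [hi, hj]
    exact fin_aux (key ![i, j, k, π k] (inj_of_nodup _ (by simp [hij, hik, hjk, hk1.symm, hk2.symm, hk3.symm])) ![0, 1, 2, 2, 0, 3] 0
      (by decide +kernel))
      (by simp only [bigQ, sym6, hij, hik, hjk, hji, hki, hkj, hk1, hk2, hk3, hi, hj, if_true, if_false]; norm_num [Nat.factorial])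
  · rw [hi, hj, hk]
    exact fin_aux (key ![i, j, k] (inj_of_nodup _ (by simp [hij, hik, hjk])) ![0, 1, 2, 2, 1, 0] 0
      (by decide +kernel))
      (by simp only [bigQ, sym6, hij, hik, hjk, hji, hki, hkj, hi, hj, hk, if_true, if_false]; norm_num [Nat.factorial])
  · rw [hi, hj]
    exact fin_aux (key ![i, j, k, π k] (inj_of_nodup _ (by simp [hij, hik, hjk, hk1.symm, hk2.symm, hk3.symm])) ![0, 1, 2, 2, 1, 3] 0
      (by decide +kernel))
      (by simp only [bigQ, sym6, hij, hik, hjk, hji, hki, hkj, hk1, hk2, hk3, hi, hj, if_true, if_false]; norm_num [Nat.factorial])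
  · rw [hi, hk]
    exact fin_aux (key ![i, j, k, π j] (inj_of_nodup _ (by simp [hij, hik, hjk, hj1.symm, hj2.symm, hj3.symm])) ![0, 1, 2, 2, 3, 0] 0
      (by decide +kernel))
      (by simp only [bigQ, sym6, hij, hik, hjk, hji, hki, hkj, hj1, hj2, hj3, hi, hk, if_true, if_false]; norm_num [Nat.factorial])
  · rw [hi, hk]
    exact fin_aux (key ![i, j, k, π j] (inj_of_nodup _ (by simp [hij, hik, hjk, hj1.symm, hj2.symm, hj3.symm])) ![0, 1, 2, 2, 3, 1] 0
      (by decide +kernel))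
      (by simp only [bigQ, sym6, hij, hik, hjk, hji, hki, hkj, hj1, hj2, hj3, hi, hk, if_true, if_false]; norm_num [Nat.factorial])
  · rw [hi]
    exact fin_aux (key ![i, j, k, π j, π k] (inj_of_nodup _ (by simp [hij, hik, hjk, hj1.symm, hj2.symm, hj3.symm, hk1.symm, hk2.symm, hk3.symm, ejk])) ![0, 1, 2, 2, 3, 4] 1
      (by decide +kernel))
      (by simp only [bigQ, sym6, hij, hik, hjk, hji, hki, hkj, hj1, hj2, hj3, hk1, hk2, hk3, hi, if_true, if_false]; norm_num [Nat.factorial])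
  · rw [hj, hk]
    exact fin_aux (key ![i, j, k, π i] (inj_of_nodup _ (by simp [hij, hik, hjk, hi1.symm, hi2.symm, hi3.symm])) ![0, 1, 2, 3, 0, 1] 0
      (by decide +kernel))
      (by simp only [bigQ, sym6, hij, hik, hjk, hji, hki, hkj, hi1, hi2, hi3, hj, hk, if_true, if_false]; norm_num [Nat.factorial])
  · rw [hj, hk]
    exact fin_aux (key ![i, j, k, π i] (inj_of_nodup _ (by simp [hij, hik, hjk, hi1.symm, hi2.symm, hi3.symm])) ![0, 1, 2, 3, 0, 2] 0
      (by decide +kernel))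
      (by simp only [bigQ, sym6, hij, hik, hjk, hji, hki, hkj, hi1, hi2, hi3, hj, hk, if_true, if_false]; norm_num [Nat.factorial])
  · rw [hj]
    exact fin_aux (key ![i, j, k, π i, π k] (inj_of_nodup _ (by simp [hij, hik, hjk, hi1.symm, hi2.symm, hi3.symm, hk1.symm, hk2.symm, hk3.symm, eik])) ![0, 1, 2, 3, 0, 4] 1
      (by decide +kernel))
      (by simp only [bigQ, sym6, hij, hik, hjk, hji, hki, hkj, hi1, hi2, hi3, hk1, hk2, hk3, hj, if_true, if_false]; norm_num [Nat.factorial])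
  · rw [hj, hk]
    exact fin_aux (key ![i, j, k, π i] (inj_of_nodup _ (by simp [hij, hik, hjk, hi1.symm, hi2.symm, hi3.symm])) ![0, 1, 2, 3, 1, 0] 1
      (by decide +kernel))
      (by simp only [bigQ, sym6, hij, hik, hjk, hji, hki, hkj, hi1, hi2, hi3, hj, hk, if_true, if_false]; norm_num [Nat.factorial])
  · rw [hj, hk]
    exact fin_aux (key ![i, j, k, π i] (inj_of_nodup _ (by simp [hij, hik, hjk, hi1.symm, hi2.symm, hi3.symm])) ![0, 1, 2, 3, 1, 2] 0
      (by decide +kernel))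
      (by simp only [bigQ, sym6, hij, hik, hjk, hji, hki, hkj, hi1, hi2, hi3, hj, hk, if_true, if_false]; norm_num [Nat.factorial])
  · rw [hj]
    exact fin_aux (key ![i, j, k, π i, π k] (inj_of_nodup _ (by simp [hij, hik, hjk, hi1.symm, hi2.symm, hi3.symm, hk1.symm, hk2.symm, hk3.symm, eik])) ![0, 1, 2, 3, 1, 4] 3
      (by decide +kernel))
      (by simp only [bigQ, sym6, hij, hik, hjk, hji, hki, hkj, hi1, hi2, hi3, hk1, hk2, hk3, hj, if_true, if_false]; norm_num [Nat.factorial])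
  · rw [hj, hk]
    exact fin_aux (key ![i, j, k, π i] (inj_of_nodup _ (by simp [hij, hik, hjk, hi1.symm, hi2.symm, hi3.symm])) ![0, 1, 2, 3, 2, 0] 1
      (by decide +kernel))
      (by simp only [bigQ, sym6, hij, hik, hjk, hji, hki, hkj, hi1, hi2, hi3, hj, hk, if_true, if_false]; norm_num [Nat.factorial])
  · rw [hj, hk]
    exact fin_aux (key ![i, j, k, π i] (inj_of_nodup _ (by simp [hij, hik, hjk, hi1.symm, hi2.symm, hi3.symm])) ![0, 1, 2, 3, 2, 1] 2
      (by decide +kernel))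
      (by simp only [bigQ, sym6, hij, hik, hjk, hji, hki, hkj, hi1, hi2, hi3, hj, hk, if_true, if_false]; norm_num [Nat.factorial])
  · rw [hj]
    exact fin_aux (key ![i, j, k, π i, π k] (inj_of_nodup _ (by simp [hij, hik, hjk, hi1.symm, hi2.symm, hi3.symm, hk1.symm, hk2.symm, hk3.symm, eik])) ![0, 1, 2, 3, 2, 4] 6
      (by decide +kernel))
      (by simp only [bigQ, sym6, hij, hik, hjk, hji, hki, hkj, hi1, hi2, hi3, hk1, hk2, hk3, hj, if_true, if_false]; norm_num [Nat.factorial])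
  · rw [hk]
    exact fin_aux (key ![i, j, k, π i, π j] (inj_of_nodup _ (by simp [hij, hik, hjk, hi1.symm, hi2.symm, hi3.symm, hj1.symm, hj2.symm, hj3.symm, eij])) ![0, 1, 2, 3, 4, 0] 3
      (by decide +kernel))
      (by simp only [bigQ, sym6, hij, hik, hjk, hji, hki, hkj, hi1, hi2, hi3, hj1, hj2, hj3, hk, if_true, if_false]; norm_num [Nat.factorial])
  · rw [hk]
    exact fin_aux (key ![i, j, k, π i, π j] (inj_of_nodup _ (by simp [hij, hik, hjk, hi1.symm, hi2.symm, hi3.symm, hj1.symm, hj2.symm, hj3.symm, eij])) ![0, 1, 2, 3, 4, 1] 4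
      (by decide +kernel))
      (by simp only [bigQ, sym6, hij, hik, hjk, hji, hki, hkj, hi1, hi2, hi3, hj1, hj2, hj3, hk, if_true, if_false]; norm_num [Nat.factorial])
  · rw [hk]
    exact fin_aux (key ![i, j, k, π i, π j] (inj_of_nodup _ (by simp [hij, hik, hjk, hi1.symm, hi2.symm, hi3.symm, hj1.symm, hj2.symm, hj3.symm, eij])) ![0, 1, 2, 3, 4, 2] 3
      (by decide +kernel))
      (by simp only [bigQ, sym6, hij, hik, hjk, hji, hki, hkj, hi1, hi2, hi3, hj1, hj2, hj3, hk, if_true, if_false]; norm_num [Nat.factorial])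
  · exact fin_aux (key ![i, j, k, π i, π j, π k] (inj_of_nodup _ (by simp [hij, hik, hjk, hi1.symm, hi2.symm, hi3.symm, hj1.symm, hj2.symm, hj3.symm, hk1.symm, hk2.symm, hk3.symm, eij, eik, ejk])) ![0, 1, 2, 3, 4, 5] 20
      (by decide +kernel))
      (by simp only [bigQ, sym6, hij, hik, hjk, hji, hki, hkj, hi1, hi2, hi3, hj1, hj2, hj3, hk1, hk2, hk3, if_true, if_false]; norm_num [Nat.factorial])

/-- sum over triples of distinct elements -/
def dsum {n : ℕ} (f : Fin n → Fin n → Fin n → ℚ) : ℚ :=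
  ∑ i, ∑ j, ∑ k, if i ≠ j ∧ i ≠ k ∧ j ≠ k then f i j k else 0

theorem dsum_add {n : ℕ} (f g : Fin n → Fin n → Fin n → ℚ) :
    dsum (fun i j k => f i j k + g i j k) = dsum f + dsum g := by
  simp only [dsum, ← Finset.sum_add_distrib]
  refine sum_congr rfl fun i _ => sum_congr rfl fun j _ => sum_congr rfl fun k _ => ?_
  split_ifs <;> simp

theorem dsum_mul {n : ℕ} (c : ℚ) (f : Fin n → Fin n → Fin n → ℚ) :
    dsum (fun i j k => c * f i j k) = c * dsum f := by
  simp only [dsum, Finset.mul_sum, mul_ite, mul_zero]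

theorem dsum_swap {n : ℕ} (f : Fin n → Fin n → Fin n → ℚ) :
    dsum (fun i j k => f j i k) = dsum f := by
  unfold dsum
  rw [Finset.sum_comm]
  refine sum_congr rfl fun i _ => sum_congr rfl fun j _ => sum_congr rfl fun k _ => ?_
  congr 1
  simp only [eq_iff_iff]
  tauto

theorem dsum_swap' {n : ℕ} (f : Fin n → Fin n → Fin n → ℚ) :
    dsum (fun i j k => f i k j) = dsum f := by
  unfold dsum
  refine sum_congr rfl fun i _ => ?_
  rw [Finset.sum_comm]
  refine sum_congr rfl fun j _ => sum_congr rfl fun k _ => ?_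
  congr 1
  simp only [eq_iff_iff]
  tauto

theorem dsum_sym6 {n : ℕ} (R : Fin n → Fin n → Fin n → ℚ) (c₀ c₁ c₂ c₃ c₄ c₅ : ℚ) :
    dsum (fun i j k => sym6 R c₀ c₁ c₂ c₃ c₄ c₅ i j k) =
      (c₀ + c₁ + c₂ + c₃ + c₄ + c₅) * dsum R := by
  have h1 := dsum_swap' R
  have h2 := dsum_swap R
  have h3 : dsum (fun i j k => R j k i) = dsum R :=
    (dsum_swap (fun i j k => R i k j)).trans h1
  have h4 : dsum (fun i j k => R k i j) = dsum R :=
    (dsum_swap' (fun i j k => R j i k)).trans h2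
  have h5 : dsum (fun i j k => R k j i) = dsum R :=
    (dsum_swap (fun i j k => R k i j)).trans h4
  simp only [sym6, dsum_add, dsum_mul, h1, h2, h3, h4, h5]
  ring

theorem dsum_incl {n : ℕ} (f : Fin n → Fin n → Fin n → ℚ) :
    dsum f = ∑ i, ∑ j, ∑ k, f i j k - ∑ i, ∑ k, f i i k - ∑ i, ∑ j, f i j j - ∑ i, ∑ j, f i j i
      + 2 * ∑ i, f i i i := by
  have h : ∀ i j k, (if i ≠ j ∧ i ≠ k ∧ j ≠ k then f i j k else 0) =
      f i j k - (if i = j then f i i k else 0) - (if j = k then f i j j else 0)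
        - (if i = k then f i j i else 0) + 2 * (if i = j then (if i = k then f i i i else 0) else 0) := by
    intro i j k
    by_cases h1 : i = j
    · subst h1
      by_cases h2 : i = k
      · subst h2; simp; ring
      · simp [h2]
    · by_cases h2 : i = k
      · subst h2; simp [h1, Ne.symm h1]
      · by_cases h3 : j = k
        · subst h3; simp [h1]
        · simp [h1, h2, h3]
  simp only [dsum, h, Finset.sum_add_distrib, Finset.sum_sub_distrib, ← Finset.mul_sum]
  congr 1
  · congr 1
    · congr 1
      · congr 1
        refine sum_congr rfl fun i _ => ?_
        rw [Finset.sum_comm]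
        simp
      · simp
    · simp
  · simp

theorem dsum_bigQ {n : ℕ} (D : Fin n → Fin n → ℚ) (p P2 P3 : ℚ)
    (hr : ∀ i, ∑ j, D i j = 1) (hsq : ∀ i j, D i j * D i j = D i j)
    (ho : ∀ i j, D i i * D i j = if i = j then D i i else 0)
    (ho' : ∀ i j, D i i * D j i = if i = j then D i i else 0)
    (hp : ∑ i, D i i = p) (hP2 : ∑ i, ∑ j, D i j * D j i = P2)
    (hP3 : ∑ i, ∑ j, ∑ k, D i j * D j k * D k i = P3) :
    dsum (bigQ D) = 1/36 * (n * (n-1) * (n-2)) + 1/60 * (p * (n-1) * (n-2))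
      - 1/60 * ((n - p) * (n-2)) - 1/30 * (p * (p-1) * (n-2)) + 1/15 * (p * (n - p))
      + 1/60 * ((P2 - p) * (n-2)) - 1/20 * (n - P2) - 1/90 * (p * (p-1) * (p-2))
      + 0 * (p * (P2 - p)) + 1/90 * (P3 - p) := by
  have e0 : dsum (fun _ _ _ : Fin n => (1:ℚ)) = n * (n-1) * (n-2) := by
    rw [dsum_incl]; simp; ring
  have e1 : dsum (fun i _ _ : Fin n => D i i) = p * (n-1) * (n-2) := by
    rw [dsum_incl]; simp [hp, ← Finset.mul_sum]; ring
  have e2 : dsum (fun i j _ : Fin n => D i j) = (n-p) * (n-2) := by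
    rw [dsum_incl]; simp [hp, hr, ← Finset.mul_sum]; ring
  have e3 : dsum (fun i j _ : Fin n => D i i * D j j) = p * (p-1) * (n-2) := by
    rw [dsum_incl]; simp [hsq, hp, hr, ← Finset.mul_sum, ← Finset.sum_mul]; ring
  have e4 : dsum (fun i j k : Fin n => D i i * D j k) = p * (n-p) := by
    rw [dsum_incl]; simp [ho, ho', hp, hr, ← Finset.mul_sum, ← Finset.sum_mul]; ring
  have e5 : dsum (fun i j _ : Fin n => D i j * D j i) = (P2-p) * (n-2) := by
    rw [dsum_incl]; simp [hsq, hp, hP2, ← Finset.mul_sum, ← Finset.sum_mul]; ring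
  have e6 : dsum (fun i j k : Fin n => D i j * D j k) = n - P2 := by
    rw [dsum_incl]; simp [hsq, hp, hP2, hr, ← Finset.mul_sum, ← Finset.sum_mul]
    have : ∀ i j, D i j * D j j = if j = i then D j j else 0 := fun i j => by rw [mul_comm, ho']
    simp [this, hp]; ring
  have e7 : dsum (fun i j k : Fin n => D i i * D j j * D k k) = p * (p-1) * (p-2) := by
    rw [dsum_incl]
    have : ∀ i j, D i i * D j j * D j j = D i i * D j j := fun i j => by rw [mul_assoc, hsq]
    have h' : ∀ i j, D i i * D j j * D i i = D i i * D j j := fun i j => by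
      rw [mul_right_comm, hsq]
    simp [hsq, this, h', hp, ← Finset.mul_sum, ← Finset.sum_mul]; ring
  have e8 : dsum (fun i j k : Fin n => D i i * D j k * D k j) = p * (P2-p) := by
    rw [dsum_incl]
    have a1 : ∀ i k, D i i * D i k * D k i = if i = k then D i i else 0 := fun i k => by
      rw [ho]; split_ifs with h
      · subst h; rw [hsq]
      · simp
    have a2 : ∀ i j, D i i * D j j * D j j = D i i * D j j := fun i j => by rw [mul_assoc, hsq]
    have a3 : ∀ i j, D i i * D j i * D i j = if i = j then D i i else 0 := fun i k => by
      rw [ho']; split_ifs with h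
      · subst h; rw [hsq]
      · simp
    have a4 : ∑ i, ∑ j, ∑ k, D i i * D j k * D k j = p * P2 := by
      simp only [mul_assoc, ← Finset.mul_sum, hP2, ← Finset.sum_mul, hp]
    rw [a4]
    simp [a1, a2, a3, hsq, hp, ← Finset.mul_sum, ← Finset.sum_mul]; ring
  have e9 : dsum (fun i j k : Fin n => D i j * D j k * D k i) = P3 - p := by
    rw [dsum_incl, hP3]
    have a1 : ∀ i k, D i i * D i k * D k i = if i = k then D i i else 0 := fun i k => by
      rw [ho]; split_ifs with h
      · subst h; rw [hsq]
      · simp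
    have a2 : ∀ i j, D i j * D j j * D j i = if j = i then D j j else 0 := fun i j => by
      rw [mul_right_comm, mul_comm (D i j), mul_comm, ← mul_assoc, a1]
    have a3 : ∀ i j, D i j * D j i * D i i = if i = j then D i i else 0 := fun i k => by
      rw [mul_assoc, mul_comm (D k i), ho', mul_comm]; split_ifs with h
      · subst h; rw [hsq]
      · simp
    simp [a1, a2, a3, hsq, hp]; ring
  unfold bigQ
  simp only [dsum_add, dsum_sym6, e0, e1, e2, e3, e4, e5, e6, e7, e8, e9]
  ring

theorem dsum_perm {n : ℕ} (π : Perm (Fin n)) (p q r : ℚ)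
    (hp : p = (π.partition.parts.count 1 : ℚ)) (hq : q = (π.partition.parts.count 2 : ℚ))
    (hr : r = (π.partition.parts.count 3 : ℚ)) :
    dsum (bigQ (fun u v => if π u = v then (1 : ℚ) else 0)) =
      1/36 * (n * (n-1) * (n-2)) + 1/60 * (p * (n-1) * (n-2))
      - 1/60 * ((n - p) * (n-2)) - 1/30 * (p * (p-1) * (n-2)) + 1/15 * (p * (n - p))
      + 1/60 * (2 * q * (n-2)) - 1/20 * (n - p - 2 * q) - 1/90 * (p * (p-1) * (p-2))
      + 1/90 * (3 * r) := by
  have h2 := fix_pow π 2 Nat.prime_two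
  have h3 := fix_pow π 3 Nat.prime_three
  rw [← hp, ← hq] at h2
  rw [← hp, ← hr] at h3
  rw [dsum_bigQ _ p (p + 2 * q) (p + 3 * r)]
  · ring
  · simp
  · intro i j; split_ifs <;> simp
  · intro i j
    by_cases h : π i = i
    · simp [h]
    · simp [h]
  · intro i j
    by_cases h : π i = i
    · by_cases h' : i = j
      · subst h'; simp [h]
      · have : π j ≠ i := fun h'' => h' (π.injective (h.trans h''.symm))
        simp [h', this]
    · simp [h]
  · rw [hp, count_one]; simp
  · show _ = _
    simp only [ite_mul, one_mul, zero_mul, Finset.sum_ite_eq, Finset.mem_univ, if_true]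
    simpa [pow_succ] using h2
  · simp only [mul_assoc, ← Finset.mul_sum]
    simp only [ite_mul, one_mul, zero_mul, Finset.sum_ite_eq, Finset.mem_univ, if_true]
    simpa [pow_succ, mul_assoc] using h3

theorem mem_conjClass_conj {n : ℕ} (lam : n.Partition) (σ π : Perm (Fin n)) :
    σ * π * σ⁻¹ ∈ conjClass n lam ↔ π ∈ conjClass n lam := by
  have : (σ * π * σ⁻¹).partition = π.partition :=
    (Perm.partition_eq_of_isConj.1 (isConj_iff.2 ⟨σ, rfl⟩)).symm
  simp [conjClass, this]

theorem sum_conj {n : ℕ} (lam : n.Partition) (f : Perm (Fin n) → ℚ) (σ : Perm (Fin n)) :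
    ∑ π ∈ conjClass n lam, f (σ * π * σ⁻¹) = ∑ π ∈ conjClass n lam, f π :=
  Finset.sum_equiv (MulAut.conj σ).toEquiv (fun π => (mem_conjClass_conj lam σ π).symm)
    (fun _ _ => rfl)

/-- number of 132 occurrences as a sum -/
def occ {n : ℕ} (π : Perm (Fin n)) : ℚ := ∑ i, ∑ j, ∑ k, pat i j k (π i) (π j) (π k)

theorem occ_conj {n : ℕ} (π σ : Perm (Fin n)) : occ (σ * π * σ⁻¹) =
    ∑ i, ∑ j, ∑ k, pat (σ i) (σ j) (σ k) (σ (π i)) (σ (π j)) (σ (π k)) := by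
  unfold occ
  rw [← Equiv.sum_comp σ]
  refine sum_congr rfl fun i _ => ?_
  rw [← Equiv.sum_comp σ]
  refine sum_congr rfl fun j _ => ?_
  rw [← Equiv.sum_comp σ]
  simp

theorem sum_occ_conj {n : ℕ} (π : Perm (Fin n)) : ∑ σ : Perm (Fin n), occ (σ * π * σ⁻¹) =
    n.factorial * dsum (bigQ (fun u v => if π u = v then (1 : ℚ) else 0)) := by
  simp only [occ_conj, dsum, Finset.mul_sum]
  rw [Finset.sum_comm]
  refine sum_congr rfl fun i _ => ?_
  rw [Finset.sum_comm]
  refine sum_congr rfl fun j _ => ?_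
  rw [Finset.sum_comm]
  refine sum_congr rfl fun k _ => ?_
  split_ifs with h
  · exact pointwise π i j k h.1 h.2.1 h.2.2
  · rw [mul_zero]
    refine Finset.sum_eq_zero fun σ _ => ?_
    unfold pat
    rw [if_neg]
    rintro ⟨h1, h2, -⟩
    refine h ⟨?_, ?_, ?_⟩ <;> rintro rfl
    · exact lt_irrefl _ h1
    · exact lt_irrefl _ (h1.trans h2)
    · exact lt_irrefl _ h2

theorem sum_occ {n : ℕ} (lam : n.Partition) (p q r : ℚ)
    (hp : p = (lam.parts.count 1 : ℚ)) (hq : q = (lam.parts.count 2 : ℚ))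
    (hr : r = (lam.parts.count 3 : ℚ)) :
    ∑ π ∈ conjClass n lam, occ π = (conjClass n lam).card * (
      1/36 * (n * (n-1) * (n-2)) + 1/60 * (p * (n-1) * (n-2))
      - 1/60 * ((n - p) * (n-2)) - 1/30 * (p * (p-1) * (n-2)) + 1/15 * (p * (n - p))
      + 1/60 * (2 * q * (n-2)) - 1/20 * (n - p - 2 * q) - 1/90 * (p * (p-1) * (p-2))
      + 1/90 * (3 * r)) := by
  have hf : (n.factorial : ℚ) ≠ 0 := by positivity
  apply mul_left_cancel₀ hf
  calc (n.factorial : ℚ) * ∑ π ∈ conjClass n lam, occ π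
      = ∑ σ : Perm (Fin n), ∑ π ∈ conjClass n lam, occ π := by simp [Fintype.card_perm]
    _ = ∑ σ : Perm (Fin n), ∑ π ∈ conjClass n lam, occ (σ * π * σ⁻¹) :=
        sum_congr rfl fun σ _ => (sum_conj lam occ σ).symm
    _ = ∑ π ∈ conjClass n lam, ∑ σ : Perm (Fin n), occ (σ * π * σ⁻¹) := Finset.sum_comm
    _ = ∑ π ∈ conjClass n lam, (n.factorial : ℚ) * (
      1/36 * (n * (n-1) * (n-2)) + 1/60 * (p * (n-1) * (n-2))
      - 1/60 * ((n - p) * (n-2)) - 1/30 * (p * (p-1) * (n-2)) + 1/15 * (p * (n - p))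
      + 1/60 * (2 * q * (n-2)) - 1/20 * (n - p - 2 * q) - 1/90 * (p * (p-1) * (p-2))
      + 1/90 * (3 * r)) := by
        refine sum_congr rfl fun π hπ => ?_
        have hpart : π.partition.parts = lam.parts := (mem_filter.1 hπ).2
        rw [sum_occ_conj, dsum_perm π p q r] <;> rwa [hpart]
    _ = _ := by rw [sum_const, nsmul_eq_mul]; ring

theorem card_eq_occ {n : ℕ} (π : Perm (Fin n)) :
    ((((Finset.univ : Finset (Fin n × Fin n × Fin n)).filter fun x =>
          x.1 < x.2.1 ∧ x.2.1 < x.2.2 ∧ π x.1 < π x.2.2 ∧ π x.2.2 < π x.2.1).card : ℚ)) = occ π := by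
  rw [Finset.natCast_card_filter]
  simp only [Fintype.sum_prod_type]
  rfl

theorem card_eq_occ' {n : ℕ} (π : Perm (Fin n)) :
    ((((Finset.univ : Finset (Fin n × Fin n × Fin n)).filter fun x =>
          x.1 < x.2.1 ∧ x.2.1 < x.2.2 ∧ π x.2.1 < π x.1 ∧ π x.1 < π x.2.2).card : ℚ)) =
      occ (Fin.revPerm * π * Fin.revPerm⁻¹) := by
  rw [Finset.natCast_card_filter, occ_conj]
  simp only [Fintype.sum_prod_type, pat, Fin.revPerm_apply, Fin.rev_lt_rev]
  have : ∀ f : Fin n → Fin n → Fin n → ℚ,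
      ∑ i, ∑ j, ∑ k, f i j k = ∑ i, ∑ j, ∑ k, f k j i := by
    intro f
    rw [Finset.sum_comm]
    conv_rhs => rw [Finset.sum_comm]
    exact sum_congr rfl fun j _ => Finset.sum_comm
  rw [this]
  refine sum_congr rfl fun i _ => sum_congr rfl fun j _ => sum_congr rfl fun k _ => ?_
  congr 1
  simp only [eq_iff_iff]
  tauto

theorem stmt9 (n : ℕ) (hn : 3 ≤ n) (lam : n.Partition)
    (p q r X₁ X₂ X₃ X₄ : ℚ)
    (hp : p = (lam.parts.count 1 : ℚ)) (hq : q = (lam.parts.count 2 : ℚ))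
    (hr : r = (lam.parts.count 3 : ℚ))
    (hX1 : X₁ = p - 1) (hX2 : X₂ = (p - 1) * (p - 2) / 2 + q - 1)
    (hX3 : X₃ = (p - 1) * (p - 2) / 2 - q)
    (hX4 : X₄ = (p - 1) * (p - 2) * (p - 3) / 3 - p - r + 2) :
    ((∑ π ∈ conjClass n lam,
      ((((Finset.univ : Finset (Fin n × Fin n × Fin n)).filter fun x =>
          x.1 < x.2.1 ∧ x.2.1 < x.2.2 ∧ π x.1 < π x.2.2 ∧ π x.2.2 < π x.2.1).card : ℚ)))
      = ((conjClass n lam).card : ℚ) *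
        ((n.choose 3 : ℚ) / 6 + ((n : ℚ) + 1) * ((n : ℚ) - 3) * X₁ / 60
          - ((n : ℚ) + 1) * X₂ / 60 - ((n : ℚ) + 1) * X₃ / 20 - X₄ / 30)) ∧
    ((∑ π ∈ conjClass n lam,
      ((((Finset.univ : Finset (Fin n × Fin n × Fin n)).filter fun x =>
          x.1 < x.2.1 ∧ x.2.1 < x.2.2 ∧ π x.2.1 < π x.1 ∧ π x.1 < π x.2.2).card : ℚ)))
      = ((conjClass n lam).card : ℚ) *
        ((n.choose 3 : ℚ) / 6 + ((n : ℚ) + 1) * ((n : ℚ) - 3) * X₁ / 60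
          - ((n : ℚ) + 1) * X₂ / 60 - ((n : ℚ) + 1) * X₃ / 20 - X₄ / 30)) := by
  subst hX1 hX2 hX3 hX4
  have key := sum_occ lam p q r hp hq hr
  have hch : (n.choose 3 : ℚ) = n * (n - 1) * (n - 2) / 6 := by
    rw [Nat.cast_choose_eq_descPochhammer_div]
    simp [descPochhammer_succ_left, Nat.factorial]
    ring
  constructor
  · simp only [card_eq_occ]
    rw [key, hch]
    ring
  · simp only [card_eq_occ']
    rw [sum_conj lam occ, key, hch]
    ring
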